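/- Let (P_t)_{t≥0} be an increasing family of orthogonal projections on H and let (ξ_t)_{t≥0} be an H-valued martingale with respect to (P_t), i.e. ξ_s = P_s ξ_t whenever s ≤ t. Let f : [0,∞) → B(H) be hermitian, increasing, and adapted-commuting with respect to (P_t), and fix [a,b] ⊆ [0,∞). Then the net of vectors Σ_{k=1}^m f(t_{k−1})(ξ_{t_k} − ξ_{t_{k−1}}), indexed by the partitions {a = t_0 < ⋯ < t_m = b} of [a,b] directed by refinement, converges in norm in H, and the norm of the limit is at most max{‖f(a)‖, ‖f(b)‖} · ‖ξ_b‖. -/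

import Mathlib

/-- `vecSum f ξ θ` is the vector sum Σ_{k=1}^m f(t_{k−1})(ξ_{t_k} − ξ_{t_{k−1}})
where t₀ < t₁ < ⋯ < tₘ is the increasing enumeration of the finite set θ. -/
noncomputable def vecSum {H : Type*} [NormedAddCommGroup H] [InnerProductSpace ℂ H]
    (f : ℝ → H →L[ℂ] H) (ξ : ℝ → H) (θ : Finset ℝ) : H :=
  (((θ.sort (· ≤ ·)).zip (θ.sort (· ≤ ·)).tail).map
    (fun p => f p.1 (ξ p.2 - ξ p.1))).sum

/-- `IsPartitionOf a b θ`: θ is a partition a = t₀ < t₁ < ⋯ < tₘ = b of [a,b]. -/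
def IsPartitionOf (a b : ℝ) (θ : Finset ℝ) : Prop :=
  a ∈ θ ∧ b ∈ θ ∧ ∀ x ∈ θ, x ∈ Set.Icc a b

/-!
For `s ≤ t` the increment `P t - P s` is a projection commuting with `f s`. As `f` is increasing,
`f s * (P u - P s) ≤ f s * (P t - P s) + f t * (P u - P t)` whenever `s ≤ t ≤ u`, so the operator
sums `∑ f(tₖ₋₁) (P(tₖ) - P(tₖ₋₁))` increase under refinement; and as `-r ≤ f t ≤ r` on `[a, b]` for
`r = max ‖f a‖ ‖f b‖`, telescoping keeps them between `-r` and `r`. A bounded increasing net of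
operators converges strongly, and the vector sums are the operator sums evaluated at `ξ b`.
-/

open Filter Topology

section ConsecutiveSum

/-- The sum `φ t₀ t₁ + φ t₁ t₂ + ⋯ + φ tₘ₋₁ tₘ` over the consecutive pairs of a list
`[t₀, …, tₘ]`: the common shape of the vector sums `vecSum` and of their operator-valued
counterparts. -/
def consecutiveSum {ι M : Type*} [AddMonoid M] (φ : ι → ι → M) (l : List ι) : M :=
  (l.consecutivePairs.map fun p => φ p.1 p.2).sum

variable {ι M N : Type*}

lemma consecutiveSum_singleton [AddMonoid M] (φ : ι → ι → M) (s : ι) :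
    consecutiveSum φ [s] = 0 := rfl

lemma consecutiveSum_cons_cons [AddMonoid M] (φ : ι → ι → M) (s t : ι) (l : List ι) :
    consecutiveSum φ (s :: t :: l) = φ s t + consecutiveSum φ (t :: l) :=
  List.sum_cons

lemma consecutiveSum_congr [AddMonoid M] {φ ψ : ι → ι → M} {l : List ι}
    (h : ∀ s ∈ l, ∀ t ∈ l, φ s t = ψ s t) : consecutiveSum φ l = consecutiveSum ψ l :=
  congrArg List.sum <| List.map_congr_left fun _ hp =>
    h _ (List.of_mem_zip hp).1 _ (List.mem_of_mem_tail (List.of_mem_zip hp).2)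

lemma map_consecutiveSum {F : Type*} [AddMonoid M] [AddMonoid N] [FunLike F M N]
    [AddMonoidHomClass F M N] (e : F) (φ : ι → ι → M) (l : List ι) :
    e (consecutiveSum φ l) = consecutiveSum (fun s t => e (φ s t)) l := by
  simp [consecutiveSum, map_list_sum, Function.comp_def]

variable [LinearOrder ι] {a b p : ι}

lemma consecutiveSum_le_sub_of_le_sub [AddCommGroup M] [PartialOrder M] [IsOrderedAddMonoid M]
    {φ : ι → ι → M} {g : ι → M} (h : ∀ s t, a ≤ s → s ≤ t → t ≤ b → φ s t ≤ g t - g s)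
    {l : List ι} (hap : a ≤ p) (hsort : (p :: l).Pairwise (· < ·)) (hle : ∀ x ∈ p :: l, x ≤ b)
    (hb : b ∈ p :: l) : consecutiveSum φ (p :: l) ≤ g b - g p := by
  induction l generalizing p with
  | nil => simp [consecutiveSum_singleton, List.mem_singleton.1 hb]
  | cons t l ih =>
    obtain ⟨hp, hsort⟩ := List.pairwise_cons.1 hsort
    obtain ⟨-, hle⟩ := List.forall_mem_cons.1 hle
    have hpt : p < t := hp t List.mem_cons_self
    have htb : t ≤ b := hle t List.mem_cons_self
    have hb : b ∈ t :: l := (List.mem_cons.1 hb).resolve_left (hpt.trans_le htb).ne'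
    calc consecutiveSum φ (p :: t :: l) = φ p t + consecutiveSum φ (t :: l) :=
          consecutiveSum_cons_cons φ p t l
      _ ≤ (g t - g p) + (g b - g t) :=
          add_le_add (h p t hap hpt.le htb) (ih (hap.trans hpt.le) hsort hle hb)
      _ = g b - g p := by abel

lemma consecutiveSum_le_of_sublist [AddCommMonoid M] [PartialOrder M] [IsOrderedAddMonoid M]
    {φ : ι → ι → M} (h : ∀ s t u, a ≤ s → s ≤ t → t ≤ u → u ≤ b → φ s u ≤ φ s t + φ t u)
    {l₁ l₂ : List ι} (hl : l₁.Sublist l₂) (hap : a ≤ p) (hsort : (p :: l₂).Pairwise (· < ·))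
    (hle : ∀ x ∈ p :: l₂, x ≤ b) (hb : b ∈ p :: l₁) :
    consecutiveSum φ (p :: l₁) ≤ consecutiveSum φ (p :: l₂) := by
  induction hl generalizing p with
  | slnil => rfl
  | @cons l₁ l₂ t hl ih =>
    obtain ⟨hp, hsort⟩ := List.pairwise_cons.1 hsort
    obtain ⟨-, hle⟩ := List.forall_mem_cons.1 hle
    have hpt : p < t := hp t List.mem_cons_self
    have htb : t ≤ b := hle t List.mem_cons_self
    have hb : b ∈ l₁ := (List.mem_cons.1 hb).resolve_left (hpt.trans_le htb).ne'
    obtain ⟨u, l, rfl⟩ := List.exists_cons_of_ne_nil (List.ne_nil_of_mem hb)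
    have htu : t ≤ u := (List.rel_of_pairwise_cons hsort (hl.subset List.mem_cons_self)).le
    have hub : u ≤ b := hle u (List.mem_cons_of_mem t (hl.subset List.mem_cons_self))
    calc consecutiveSum φ (p :: u :: l)
        = φ p u + consecutiveSum φ (u :: l) := consecutiveSum_cons_cons φ p u l
      _ ≤ (φ p t + φ t u) + consecutiveSum φ (u :: l) :=
          add_le_add_left (h p t u hap hpt.le htu hub) _
      _ = φ p t + consecutiveSum φ (t :: u :: l) := by rw [consecutiveSum_cons_cons, add_assoc]
      _ ≤ φ p t + consecutiveSum φ (t :: l₂) :=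
          add_le_add_right (ih (hap.trans hpt.le) hsort hle (List.mem_cons_of_mem t hb)) _
      _ = consecutiveSum φ (p :: t :: l₂) := (consecutiveSum_cons_cons φ p t l₂).symm
  | @cons_cons l₁ l₂ t _ ih =>
    obtain ⟨hp, hsort⟩ := List.pairwise_cons.1 hsort
    obtain ⟨-, hle⟩ := List.forall_mem_cons.1 hle
    have hpt : p < t := hp t List.mem_cons_self
    have htb : t ≤ b := hle t List.mem_cons_self
    have hb : b ∈ t :: l₁ := (List.mem_cons.1 hb).resolve_left (hpt.trans_le htb).ne'
    rw [consecutiveSum_cons_cons, consecutiveSum_cons_cons]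
    exact add_le_add_right (ih (hap.trans hpt.le) hsort hle hb) _

end ConsecutiveSum

section IccPartition

variable {ι M : Type*} [LinearOrder ι] {a b : ι}

/-- The partitions of the order interval `[a, b]`, ordered by refinement: `IsPartitionOf` with an
arbitrary linear order in place of `ℝ`, bundled so that they index a net. -/
abbrev IccPartition (a b : ι) : Type _ :=
  {θ : Finset ι // a ∈ θ ∧ b ∈ θ ∧ ∀ x ∈ θ, x ∈ Set.Icc a b}

instance : SemilatticeSup (IccPartition a b) :=
  Subtype.semilatticeSup fun _ _ h₁ h₂ =>
    ⟨Finset.mem_union_left _ h₁.1, Finset.mem_union_left _ h₁.2.1, fun x hx =>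
      (Finset.mem_union.1 hx).elim (h₁.2.2 x) (h₂.2.2 x)⟩

namespace IccPartition

protected lemma nonempty (hab : a ≤ b) : Nonempty (IccPartition a b) :=
  ⟨{a, b}, by simp [hab]⟩

lemma sort_eq_cons (θ : IccPartition a b) :
    θ.1.sort (· ≤ ·) = a :: (θ.1.erase a).sort (· ≤ ·) := by
  conv_lhs => rw [← Finset.insert_erase θ.2.1]
  exact Finset.sort_insert _ (fun x hx => (θ.2.2.2 x (Finset.mem_of_mem_erase hx)).1)
    (Finset.notMem_erase a _)

lemma pairwise_lt_cons (θ : IccPartition a b) :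
    (a :: (θ.1.erase a).sort (· ≤ ·)).Pairwise (· < ·) :=
  θ.sort_eq_cons ▸ (Finset.sortedLT_sort θ.1).pairwise

lemma mem_cons_iff (θ : IccPartition a b) {x : ι} :
    x ∈ a :: (θ.1.erase a).sort (· ≤ ·) ↔ x ∈ θ.1 := by
  rw [← sort_eq_cons, Finset.mem_sort]

lemma consecutiveSum_le_sub [AddCommGroup M] [PartialOrder M] [IsOrderedAddMonoid M]
    {φ : ι → ι → M} {g : ι → M} (h : ∀ s t, a ≤ s → s ≤ t → t ≤ b → φ s t ≤ g t - g s)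
    (θ : IccPartition a b) : consecutiveSum φ (θ.1.sort (· ≤ ·)) ≤ g b - g a := by
  rw [sort_eq_cons]
  exact consecutiveSum_le_sub_of_le_sub h le_rfl θ.pairwise_lt_cons
    (fun x hx => (θ.2.2.2 x (θ.mem_cons_iff.1 hx)).2) (θ.mem_cons_iff.2 θ.2.2.1)

lemma monotone_consecutiveSum [AddCommMonoid M] [PartialOrder M] [IsOrderedAddMonoid M]
    {φ : ι → ι → M} (h : ∀ s t u, a ≤ s → s ≤ t → t ≤ u → u ≤ b → φ s u ≤ φ s t + φ t u) :
    Monotone fun θ : IccPartition a b => consecutiveSum φ (θ.1.sort (· ≤ ·)) := by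
  intro θ₁ θ₂ hθ
  have hsub : ((θ₁.1.erase a).sort (· ≤ ·)).Sublist ((θ₂.1.erase a).sort (· ≤ ·)) := by
    refine List.sublist_of_subperm_of_pairwise
      (List.subperm_of_subset (Finset.sort_nodup _ _) fun x hx => ?_)
      (Finset.pairwise_sort _ (· ≤ ·)) (Finset.pairwise_sort _ (· ≤ ·))
    exact (Finset.mem_sort _).2 (Finset.erase_subset_erase a hθ ((Finset.mem_sort _).1 hx))
  simp only [sort_eq_cons]
  exact consecutiveSum_le_of_sublist h hsub le_rfl θ₂.pairwise_lt_cons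
    (fun x hx => (θ₂.2.2.2 x (θ₂.mem_cons_iff.1 hx)).2) (θ₁.mem_cons_iff.2 θ₁.2.2.1)

end IccPartition

end IccPartition

section CStarAlgebra

lemma mul_le_mul_of_commute_of_isStarProjection {R : Type*} [NonUnitalRing R] [StarRing R]
    [PartialOrder R] [StarOrderedRing R] {x y e : R} (he : IsStarProjection e)
    (hx : Commute x e) (hy : Commute y e) (hxy : x ≤ y) : x * e ≤ y * e := by
  have conj_eq {z : R} (hz : Commute z e) : e * z * star e = z * e := by
    rw [he.isSelfAdjoint.star_eq, ← hz.eq, mul_assoc, he.isIdempotentElem.eq]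
  simpa only [conj_eq hx, conj_eq hy] using star_right_conjugate_le_conjugate hxy e

variable {A : Type*} [CStarAlgebra A] [PartialOrder A] [StarOrderedRing A]

lemma norm_le_of_mem_Icc_algebraMap {x : A} {r : ℝ} (hr : 0 ≤ r)
    (hx : x ∈ Set.Icc (-algebraMap ℝ A r) (algebraMap ℝ A r)) : ‖x‖ ≤ r := by
  have hself : IsSelfAdjoint x :=
    .of_ge hx.1 (IsSelfAdjoint.algebraMap A (.all r)).neg
  have hcomm : Commute (algebraMap ℝ A r) x := Algebra.commute_algebraMap_left r x
  have hmul : 0 ≤ (algebraMap ℝ A r + x) * (algebraMap ℝ A r - x) :=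
    Commute.mul_nonneg (neg_le_iff_add_nonneg'.1 hx.1) (sub_nonneg.2 hx.2)
      (((Commute.refl _).add_left hcomm.symm).sub_right (hcomm.add_left (.refl x)))
  have hsq : star x * x ≤ algebraMap ℝ A (r * r) := by
    rwa [hself.star_eq, ← sub_nonneg, map_mul, hcomm.mul_self_sub_mul_self_eq]
  refine (mul_self_le_mul_self_iff (norm_nonneg x) hr).2 ?_
  rw [← CStarRing.norm_star_mul_self]
  exact (CStarAlgebra.norm_le_iff_le_algebraMap _ (mul_self_nonneg r)
    (star_mul_self_nonneg x)).2 hsq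

lemma Icc_subset_Icc_algebraMap_max_norm {x y : A} (hx : IsSelfAdjoint x)
    (hy : IsSelfAdjoint y) : Set.Icc x y ⊆
      Set.Icc (-algebraMap ℝ A (max ‖x‖ ‖y‖)) (algebraMap ℝ A (max ‖x‖ ‖y‖)) := by
  refine Set.Icc_subset_Icc ?_ ?_
  · calc -algebraMap ℝ A (max ‖x‖ ‖y‖) ≤ -algebraMap ℝ A ‖x‖ :=
          neg_le_neg (algebraMap_mono A (le_max_left _ _))
      _ ≤ x := hx.neg_algebraMap_norm_le_self
  · calc y ≤ algebraMap ℝ A ‖y‖ := hy.le_algebraMap_norm_self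
      _ ≤ algebraMap ℝ A (max ‖x‖ ‖y‖) := algebraMap_mono A (le_max_right _ _)

lemma mul_sub_le_mul_sub_of_commute {x y p q : A} (hp : IsStarProjection p)
    (hq : IsStarProjection q) (hpq : p ≤ q) (hxp : Commute x p) (hxq : Commute x q)
    (hyp : Commute y p) (hyq : Commute y q) (hxy : x ≤ y) : x * (q - p) ≤ y * (q - p) :=
  mul_le_mul_of_commute_of_isStarProjection ((hp.le_iff_sub hq).1 hpq) (hxq.sub_right hxp)
    (hyq.sub_right hyp) hxy

end CStarAlgebra

section ProjectionSum

variable {ι A : Type*} [LinearOrder ι] [CStarAlgebra A] [PartialOrder A] [StarOrderedRing A]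
  {a b : ι} {P f : ι → A}

namespace IccPartition

lemma monotone_consecutiveSum_mul_sub (hP : ∀ t ∈ Set.Icc a b, IsStarProjection (P t))
    (hP_mono : MonotoneOn P (Set.Icc a b))
    (hfP : ∀ s ∈ Set.Icc a b, ∀ t ∈ Set.Icc a b, s ≤ t → Commute (f s) (P t))
    (hf_mono : MonotoneOn f (Set.Icc a b)) :
    Monotone fun θ : IccPartition a b =>
      consecutiveSum (fun s t => f s * (P t - P s)) (θ.1.sort (· ≤ ·)) := by
  refine monotone_consecutiveSum fun s t u has hst htu hub => ?_
  have hs : s ∈ Set.Icc a b := ⟨has, hst.trans (htu.trans hub)⟩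
  have ht : t ∈ Set.Icc a b := ⟨has.trans hst, htu.trans hub⟩
  have hu : u ∈ Set.Icc a b := ⟨ht.1.trans htu, hub⟩
  calc f s * (P u - P s) = f s * (P t - P s) + f s * (P u - P t) := by
        rw [← mul_add, add_comm, sub_add_sub_cancel]
    _ ≤ f s * (P t - P s) + f t * (P u - P t) :=
        add_le_add_right (mul_sub_le_mul_sub_of_commute (hP t ht) (hP u hu) (hP_mono ht hu htu)
          (hfP s hs t ht hst) (hfP s hs u hu (hst.trans htu)) (hfP t ht t ht le_rfl)
          (hfP t ht u hu htu) (hf_mono hs ht hst)) _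

lemma consecutiveSum_mul_sub_le (hP : ∀ t ∈ Set.Icc a b, IsStarProjection (P t))
    (hP_mono : MonotoneOn P (Set.Icc a b))
    (hfP : ∀ s ∈ Set.Icc a b, ∀ t ∈ Set.Icc a b, s ≤ t → Commute (f s) (P t)) {r : ℝ}
    (hr : 0 ≤ r) (hf : ∀ t ∈ Set.Icc a b, f t ≤ algebraMap ℝ A r) (θ : IccPartition a b) :
    consecutiveSum (fun s t => f s * (P t - P s)) (θ.1.sort (· ≤ ·)) ≤ algebraMap ℝ A r := by
  have ha : a ∈ Set.Icc a b := θ.2.2.2 a θ.2.1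
  have hb : b ∈ Set.Icc a b := θ.2.2.2 b θ.2.2.1
  have hle_one : P b - P a ≤ 1 :=
    (((hP a ha).le_iff_sub (hP b hb)).1 (hP_mono ha hb ha.2)).le_one
  calc consecutiveSum (fun s t => f s * (P t - P s)) (θ.1.sort (· ≤ ·))
      ≤ r • P b - r • P a := by
        refine θ.consecutiveSum_le_sub (g := fun t => r • P t) fun s t has hst htb => ?_
        have hs : s ∈ Set.Icc a b := ⟨has, hst.trans htb⟩
        have ht : t ∈ Set.Icc a b := ⟨has.trans hst, htb⟩
        rw [← smul_sub, Algebra.smul_def]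
        exact mul_sub_le_mul_sub_of_commute (hP s hs) (hP t ht) (hP_mono hs ht hst)
          (hfP s hs s hs le_rfl) (hfP s hs t ht hst) (Algebra.commute_algebraMap_left r _)
          (Algebra.commute_algebraMap_left r _) (hf s hs)
    _ = r • (P b - P a) := (smul_sub r _ _).symm
    _ ≤ r • 1 := smul_le_smul_of_nonneg_left hle_one hr
    _ = algebraMap ℝ A r := (Algebra.algebraMap_eq_smul_one r).symm

lemma norm_consecutiveSum_mul_sub_le (hP : ∀ t ∈ Set.Icc a b, IsStarProjection (P t))
    (hP_mono : MonotoneOn P (Set.Icc a b))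
    (hfP : ∀ s ∈ Set.Icc a b, ∀ t ∈ Set.Icc a b, s ≤ t → Commute (f s) (P t)) {r : ℝ}
    (hr : 0 ≤ r)
    (hf : ∀ t ∈ Set.Icc a b, f t ∈ Set.Icc (-algebraMap ℝ A r) (algebraMap ℝ A r))
    (θ : IccPartition a b) :
    ‖consecutiveSum (fun s t => f s * (P t - P s)) (θ.1.sort (· ≤ ·))‖ ≤ r := by
  refine norm_le_of_mem_Icc_algebraMap hr ⟨neg_le.1 ?_,
    θ.consecutiveSum_mul_sub_le hP hP_mono hfP hr fun t ht => (hf t ht).2⟩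
  have hneg := map_consecutiveSum (negAddMonoidHom : A →+ A) (fun s t => f s * (P t - P s))
    (θ.1.sort (· ≤ ·))
  simp only [negAddMonoidHom_apply, ← neg_mul] at hneg
  rw [hneg]
  exact θ.consecutiveSum_mul_sub_le (f := fun t => -f t) hP hP_mono
    (fun s hs t ht hst => (hfP s hs t ht hst).neg_left) hr fun t ht => neg_le.1 (hf t ht).1

end IccPartition

end ProjectionSum

section HilbertSpace

variable {H : Type*} [NormedAddCommGroup H] [InnerProductSpace ℂ H]

lemma re_inner_apply_mono (x : H) :
    Monotone fun B : H →L[ℂ] H => (inner ℂ (B x) x).re := by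
  intro B C hBC
  have hnonneg := ContinuousLinearMap.IsPositive.re_inner_nonneg_left hBC x
  rw [sub_apply, inner_sub_left, map_sub] at hnonneg
  exact sub_nonneg.1 hnonneg

lemma consecutiveSum_apply_sub_eq {ι : Type*} {P f : ι → H →L[ℂ] H} {ξ : ι → H} {x : H}
    {l : List ι} (hξ : ∀ t ∈ l, ξ t = P t x) :
    consecutiveSum (fun s t => f s (ξ t - ξ s)) l =
      consecutiveSum (fun s t => f s * (P t - P s)) l x := by
  calc consecutiveSum (fun s t => f s (ξ t - ξ s)) l
      = consecutiveSum (fun s t => (f s * (P t - P s)) x) l :=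
        consecutiveSum_congr fun s hs t ht => by rw [hξ s hs, hξ t ht]; rfl
    _ = consecutiveSum (fun s t => f s * (P t - P s)) l x :=
        (map_consecutiveSum (ContinuousLinearMap.apply ℂ H x)
          (fun s t => f s * (P t - P s)) l).symm

variable [CompleteSpace H]

lemma norm_apply_sq_le_of_nonneg {B : H →L[ℂ] H} (hB : 0 ≤ B) (x : H) :
    ‖B x‖ ^ 2 ≤ ‖B‖ * (inner ℂ (B x) x).re := by
  obtain ⟨C, rfl⟩ := CStarAlgebra.nonneg_iff_eq_star_mul_self.1 hB
  have hinner : (inner ℂ ((star C * C) x) x).re = ‖C x‖ ^ 2 := by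
    rw [mul_apply_eq_comp, ContinuousLinearMap.star_eq_adjoint,
      ContinuousLinearMap.adjoint_inner_left]
    exact inner_self_eq_norm_sq (𝕜 := ℂ) (C x)
  calc ‖(star C * C) x‖ ^ 2 ≤ (‖star C‖ * ‖C x‖) ^ 2 :=
        pow_le_pow_left₀ (norm_nonneg _) ((star C).le_opNorm (C x)) 2
    _ = ‖star C * C‖ * (inner ℂ ((star C * C) x) x).re := by
        rw [hinner, CStarRing.norm_star_mul_self, norm_star]
        ring

lemma norm_apply_sub_apply_sq_le {S T U : H →L[ℂ] H} (hST : S ≤ T) (hTU : T ≤ U) (x : H) :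
    ‖T x - S x‖ ^ 2 ≤ ‖U - S‖ * ((inner ℂ (T x) x).re - (inner ℂ (S x) x).re) := by
  have hpos : 0 ≤ T - S := sub_nonneg.2 hST
  calc ‖T x - S x‖ ^ 2 ≤ ‖T - S‖ * (inner ℂ ((T - S) x) x).re :=
        norm_apply_sq_le_of_nonneg hpos x
    _ = ‖T - S‖ * ((inner ℂ (T x) x).re - (inner ℂ (S x) x).re) := by
        rw [sub_apply, inner_sub_left, Complex.sub_re]
    _ ≤ ‖U - S‖ * ((inner ℂ (T x) x).re - (inner ℂ (S x) x).re) :=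
        mul_le_mul_of_nonneg_right
          (CStarAlgebra.norm_le_norm_of_nonneg_of_le hpos (sub_le_sub_right hTU S))
          (sub_nonneg.2 (re_inner_apply_mono x hST))

/- Vigier's theorem: for `i ≤ j`, Cauchy–Schwarz for the positive operator `T j - T i` bounds
`‖T j x - T i x‖ ^ 2` by a constant times the increment of the convergent real net `⟪T i x, x⟫`. -/
lemma exists_tendsto_apply_of_monotone_of_bddAbove {ι : Type*} [SemilatticeSup ι] [Nonempty ι]
    {T : ι → H →L[ℂ] H} (hT : Monotone T) (hbdd : BddAbove (Set.range T)) (x : H) :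
    ∃ v, Tendsto (fun i => T i x) atTop (𝓝 v) := by
  obtain ⟨U, hU⟩ := hbdd
  have hTU (i : ι) : T i ≤ U := hU (Set.mem_range_self i)
  set q : ι → ℝ := fun i => (inner ℂ (T i x) x).re
  have hq : Monotone q := (re_inner_apply_mono x).comp hT
  have hq_bdd : BddAbove (Set.range q) :=
    ⟨_, Set.forall_mem_range.2 fun i => re_inner_apply_mono x (hTU i)⟩
  have hdist {i j : ι} (hij : i ≤ j) :
      dist (T i x) (T j x) ≤ √(‖U - T i‖ * ((⨆ k, q k) - q i)) := by
    rw [dist_comm, dist_eq_norm]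
    refine Real.le_sqrt_of_sq_le ((norm_apply_sub_apply_sq_le (hT hij) (hTU j) x).trans ?_)
    exact mul_le_mul_of_nonneg_left (sub_le_sub_right (le_ciSup hq_bdd j) _) (norm_nonneg _)
  have hnorm_bdd : IsBoundedUnder (· ≤ ·) atTop ((‖·‖) ∘ fun i => ‖U - T i‖) := by
    obtain ⟨i₀⟩ := ‹Nonempty ι›
    refine isBoundedUnder_of_eventually_le (a := ‖U - T i₀‖) ?_
    filter_upwards [eventually_ge_atTop i₀] with i hi
    rw [Function.comp_apply, norm_norm]
    exact CStarAlgebra.norm_le_norm_of_nonneg_of_le (sub_nonneg.2 (hTU i))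
      (sub_le_sub_left (hT hi) _)
  have hgap : Tendsto (fun i => (⨆ k, q k) - q i) atTop (𝓝 0) := by
    simpa using (tendsto_atTop_ciSup hq hq_bdd).const_sub (⨆ k, q k)
  have hbound : Tendsto (fun i => √(‖U - T i‖ * ((⨆ k, q k) - q i))) atTop (𝓝 0) := by
    simpa using (isBoundedUnder_le_mul_tendsto_zero hnorm_bdd hgap).sqrt
  exact cauchySeq_tendsto_of_complete
    (cauchySeq_of_le_tendsto_0' _ (fun _ _ hij => hdist hij) hbound)

theorem martingale_integral_exists_general {ι : Type*} [LinearOrder ι] {a b : ι} (hab : a ≤ b)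
    {P : ι → H →L[ℂ] H} (hP : ∀ t ∈ Set.Icc a b, IsStarProjection (P t))
    (hP_mono : MonotoneOn P (Set.Icc a b)) {ξ : ι → H} (hξ : ∀ t ∈ Set.Icc a b, ξ t = P t (ξ b))
    {f : ι → H →L[ℂ] H} (hf : IsSelfAdjoint (f a)) (hf_mono : MonotoneOn f (Set.Icc a b))
    (hfP : ∀ s ∈ Set.Icc a b, ∀ t ∈ Set.Icc a b, s ≤ t → Commute (f s) (P t)) :
    ∃ v : H, ‖v‖ ≤ max ‖f a‖ ‖f b‖ * ‖ξ b‖ ∧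
      Tendsto (fun θ : IccPartition a b =>
        consecutiveSum (fun s t => f s (ξ t - ξ s)) (θ.1.sort (· ≤ ·))) atTop (𝓝 v) := by
  have := IccPartition.nonempty hab
  have hr : 0 ≤ max ‖f a‖ ‖f b‖ := le_max_of_le_left (norm_nonneg _)
  have hf_mem (t) (ht : t ∈ Set.Icc a b) :
      f t ∈ Set.Icc (-algebraMap ℝ (H →L[ℂ] H) (max ‖f a‖ ‖f b‖))
        (algebraMap ℝ (H →L[ℂ] H) (max ‖f a‖ ‖f b‖)) :=
    Icc_subset_Icc_algebraMap_max_norm hf (.of_ge (hf_mono ⟨le_rfl, hab⟩ ⟨hab, le_rfl⟩ hab) hf)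
      ⟨hf_mono ⟨le_rfl, hab⟩ ht ht.1, hf_mono ht ⟨hab, le_rfl⟩ ht.2⟩
  obtain ⟨v, hv⟩ := exists_tendsto_apply_of_monotone_of_bddAbove
    (IccPartition.monotone_consecutiveSum_mul_sub hP hP_mono hfP hf_mono)
    ⟨_, Set.forall_mem_range.2 fun θ =>
      θ.consecutiveSum_mul_sub_le hP hP_mono hfP hr fun t ht => (hf_mem t ht).2⟩ (ξ b)
  refine ⟨v, le_of_tendsto' hv.norm fun θ => ContinuousLinearMap.le_of_opNorm_le _
    (θ.norm_consecutiveSum_mul_sub_le hP hP_mono hfP hr hf_mem) _, hv.congr fun θ => ?_⟩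
  exact (consecutiveSum_apply_sub_eq fun t ht => hξ t (θ.2.2.2 t ((Finset.mem_sort _).1 ht))).symm

end HilbertSpace

/-- For increasing projections (P_t), an H-valued martingale (ξ_t) (i.e.
ξ_s = P_s ξ_t for s ≤ t), and hermitian increasing adapted-commuting f, the net of
vectors Σ f(t_{k−1})(ξ_{t_k} − ξ_{t_{k−1}}), indexed by the partitions of [a,b] directed
by refinement, converges in norm, and the norm of the limit is at most
max{‖f(a)‖, ‖f(b)‖}·‖ξ_b‖. -/
theorem martingale_integral_exists
    {H : Type*} [NormedAddCommGroup H] [InnerProductSpace ℂ H] [CompleteSpace H]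
    (P : ℝ → H →L[ℂ] H)
    (hP_proj : ∀ s, 0 ≤ s → IsSelfAdjoint (P s) ∧ P s ∘L P s = P s)
    (hP_mono : ∀ s u, 0 ≤ s → s ≤ u → P s ∘L P u = P s ∧ P u ∘L P s = P s)
    (ξ : ℝ → H)
    (hξ_mart : ∀ s t, 0 ≤ s → s ≤ t → ξ s = P s (ξ t))
    (f : ℝ → H →L[ℂ] H)
    (hf_herm : ∀ s, 0 ≤ s → IsSelfAdjoint (f s))
    (hf_incr : ∀ u v, 0 ≤ u → u ≤ v → (f v - f u).IsPositive)
    (hf_adapted : ∀ s u, 0 ≤ s → s ≤ u → f s ∘L P u = P u ∘L f s)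
    (a b : ℝ) (ha : 0 ≤ a) (hab : a < b) :
    ∃ v : H, ‖v‖ ≤ max ‖f a‖ ‖f b‖ * ‖ξ b‖ ∧
      ∀ ε > (0 : ℝ), ∃ θ₀ : Finset ℝ, IsPartitionOf a b θ₀ ∧
        ∀ θ : Finset ℝ, IsPartitionOf a b θ → θ₀ ⊆ θ →
          ‖vecSum f ξ θ - v‖ < ε := by
  have hP (t) (ht : t ∈ Set.Icc a b) : IsStarProjection (P t) :=
    ⟨(hP_proj t (ha.trans ht.1)).2, (hP_proj t (ha.trans ht.1)).1⟩
  obtain ⟨v, hv_norm, hv⟩ := martingale_integral_exists_general hab.le hP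
    (fun s hs t ht hst => ((hP s hs).le_iff_mul_eq_left (hP t ht)).2
      (hP_mono s t (ha.trans hs.1) hst).1)
    (fun t ht => hξ_mart t b (ha.trans ht.1) ht.2) (hf_herm a ha)
    (fun s hs t _ hst => hf_incr s t (ha.trans hs.1) hst)
    (fun s hs t _ hst => hf_adapted s t (ha.trans hs.1) hst)
  have := IccPartition.nonempty hab.le
  refine ⟨v, hv_norm, fun ε hε => ?_⟩
  obtain ⟨θ₀, hθ₀⟩ := Metric.tendsto_atTop.1 hv ε hε
  exact ⟨θ₀.1, θ₀.2, fun θ hθ hsub => dist_eq_norm (vecSum f ξ θ) v ▸ hθ₀ ⟨θ, hθ⟩ hsub⟩
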